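/- Let β > −1 and let P be a monic real polynomial of degree |n⃗| satisfying the type II Jacobi–Piñeiro orthogonality conditions: ∫_0^1 x^j P(x) x^{α_i} (1−x)^β dx = 0 for every i ∈ {1,…,p} and every j ∈ {0,…,n_i−1}. Then for every x ∈ (0,1): P(x) (1−x)^β = (−1)^{|n⃗|} [∏_{q=1}^p (α_q+1)_{n_q}/(α_q+β+|n⃗|+1)_{n_q}] · ∑_{l=0}^∞ (−|n⃗|−β)_l [∏_{q=1}^p (α_q+n_q+1)_l/(α_q+1)_l] · x^l/l!, where the series on the right converges absolutely. -/

import Mathlib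

open Finset MeasureTheory

/-- The Pochhammer symbol (rising factorial) `(a)_m` for a real number `a`. -/
noncomputable def poch (a : ℝ) (m : ℕ) : ℝ := (ascPochhammer ℝ m).eval a

/-!
Expanding `x ^ j (1 - x) ^ β` in powers of `x` and comparing with the binomial series of
`(1 - x) ^ (N + β)` shows that, for `P` of degree at most `N`, the Taylor coefficients of
`P(x) (1 - x) ^ β` are `Q(l) (-N - β)_l / l!` up to a constant, with `Q` a polynomial of degree at
most `N`. The same `Q`, evaluated at `-s - 1`, computes the moment `∫₀¹ x ^ s P(x) (1 - x) ^ β dx`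
up to a nonzero Gamma factor, by the Beta integral. The orthogonality conditions therefore say that
`Q` vanishes at the `N = ∑ n i` distinct points `-(α i + j) - 1`, so that
`Q(y) = e ∏ i, (α i + 1 + y)_{n i}`. Finally `Q(N + β)` only sees the leading coefficient of `P`,
and this determines `e`.
-/

section Pochhammer

lemma poch_zero (a : ℝ) : poch a 0 = 1 := by simp [poch]

lemma poch_zero_left {m : ℕ} (hm : m ≠ 0) : poch 0 m = 0 := by
  simp [poch, hm]

lemma poch_succ (a : ℝ) (m : ℕ) : poch a (m + 1) = poch a m * (a + m) :=
  ascPochhammer_succ_eval m a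

lemma poch_pos {a : ℝ} (ha : 0 < a) (m : ℕ) : 0 < poch a m := ascPochhammer_pos m a ha

lemma poch_add (a : ℝ) (k m : ℕ) : poch a (k + m) = poch a k * poch (a + k) m := by
  simp [poch, ← ascPochhammer_mul]

lemma poch_neg (a : ℝ) (m : ℕ) : poch (-a) m = (-1) ^ m * poch (a - m + 1) m := by
  rw [poch, ascPochhammer_eval_neg_eq_descPochhammer, descPochhammer_eval_eq_ascPochhammer, poch]

lemma poch_eq_prod_range (a : ℝ) (m : ℕ) : poch a m = ∏ j ∈ range m, (a + j) := by
  induction m with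
  | zero => simp [poch_zero]
  | succ m ih => rw [poch_succ, ih, prod_range_succ]

lemma poch_add_natCast_div_poch {a : ℝ} (ha : 0 < a) (m l : ℕ) :
    poch (a + m) l / poch a l = poch (a + l) m / poch a m := by
  rw [div_eq_div_iff (poch_pos ha l).ne' (poch_pos ha m).ne', mul_comm, ← poch_add, mul_comm,
    ← poch_add, add_comm]

lemma descPochhammer_eval_neg (a : ℝ) (k : ℕ) :
    (descPochhammer ℝ k).eval (-a) = (-1) ^ k * poch a k := by
  have h := poch_neg (a + k - 1) k
  rw [show a + k - 1 - k + 1 = a by ring, show -(a + k - 1) = -a - k + 1 by ring] at h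
  rw [descPochhammer_eval_eq_ascPochhammer, ← h, poch]

lemma descPochhammer_eval_add_div_factorial (m k : ℕ) :
    (descPochhammer ℝ k).eval ((m + k : ℕ) : ℝ) / (m + k).factorial = 1 / m.factorial := by
  have h := Nat.factorial_mul_descFactorial (Nat.le_add_left k m)
  rw [Nat.add_sub_cancel] at h
  rw [descPochhammer_eval_eq_descFactorial, div_eq_div_iff (by positivity) (by positivity),
    one_mul, mul_comm]
  exact_mod_cast h

lemma Gamma_add_natCast {a : ℝ} (ha : 0 < a) (k : ℕ) :
    Real.Gamma (a + k) = Real.Gamma a * poch a k := by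
  induction k with
  | zero => simp [poch_zero]
  | succ k ih =>
    rw [Nat.cast_succ, ← add_assoc, Real.Gamma_add_one (by positivity), ih, poch_succ]
    ring

lemma hasSum_one_sub_rpow_neg (a : ℝ) {x : ℝ} (hx : |x| < 1) :
    HasSum (fun l : ℕ ↦ poch a l * x ^ l / l.factorial) ((1 - x) ^ (-a)) := by
  have hsum := (Real.one_div_one_sub_rpow_hasFPowerSeriesOnBall_zero a).hasSum (y := x)
    (by simpa [← ENNReal.ofReal_one, Metric.eball_ofReal] using hx)
  have hpoch (l : ℕ) : l.factorial * Ring.choose (a + l - 1) l = poch a l := by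
    rw [← Ring.multichoose_eq, ← nsmul_eq_mul, Ring.factorial_nsmul_multichoose_eq_ascPochhammer,
      Polynomial.ascPochhammer_smeval_eq_eval, poch]
  have hx1 : 0 ≤ 1 - x := by linarith [(abs_lt.1 hx).2]
  rw [zero_add, one_div, ← Real.rpow_neg hx1] at hsum
  refine hsum.congr_fun fun l ↦ ?_
  rw [← hpoch]
  simp [field]

end Pochhammer

section BetaIntegral

lemma eqOn_complex_betaIntegrand (s t : ℝ) :
    Set.EqOn (fun x : ℝ ↦ (x : ℂ) ^ (((s + 1 : ℝ) : ℂ) - 1) *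
        (1 - (x : ℂ)) ^ (((t + 1 : ℝ) : ℂ) - 1))
      (fun x : ℝ ↦ ((x ^ s * (1 - x) ^ t : ℝ) : ℂ)) (Set.Ioo 0 1) := fun x hx ↦ by
  simp [Complex.ofReal_cpow hx.1.le, Complex.ofReal_cpow (sub_nonneg.2 hx.2.le)]

lemma integrableOn_rpow_mul_one_sub_rpow {s t : ℝ} (hs : -1 < s) (ht : -1 < t) :
    IntegrableOn (fun x : ℝ ↦ x ^ s * (1 - x) ^ t) (Set.Ioo 0 1) := by
  have hconv := Complex.betaIntegral_convergent (u := (s + 1 : ℝ)) (v := (t + 1 : ℝ))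
    (by simpa using neg_lt_iff_pos_add.1 hs) (by simpa using neg_lt_iff_pos_add.1 ht)
  rw [intervalIntegrable_iff_integrableOn_Ioo_of_le zero_le_one,
    integrableOn_congr_fun (eqOn_complex_betaIntegrand s t) measurableSet_Ioo] at hconv
  simpa [IntegrableOn] using hconv.re

lemma integral_rpow_mul_one_sub_rpow {s t : ℝ} (hs : -1 < s) (ht : -1 < t) :
    ∫ x in Set.Ioo (0 : ℝ) 1, x ^ s * (1 - x) ^ t =
      Real.Gamma (s + 1) * Real.Gamma (t + 1) / Real.Gamma (s + t + 2) := by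
  have hbeta := ProbabilityTheory.beta_eq_betaIntegralReal (s + 1) (t + 1)
    (by linarith) (by linarith)
  rw [ProbabilityTheory.beta, Complex.betaIntegral, intervalIntegral.integral_of_le zero_le_one,
    integral_Ioc_eq_integral_Ioo,
    setIntegral_congr_fun measurableSet_Ioo (eqOn_complex_betaIntegrand s t),
    integral_complex_ofReal, Complex.ofReal_re] at hbeta
  rw [← hbeta, show s + 1 + (t + 1) = s + t + 2 by ring]

end BetaIntegral

section MomentPolynomial

open Polynomial

/-- The image of the monomial `X ^ j`, for `j ≤ N`, under `P ↦ momentPolynomial N β P`: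
the polynomial `y (y - 1) ⋯ (y - j + 1) · (y - N - β)_{N - j}`. -/
noncomputable def momentBasis (N : ℕ) (β : ℝ) (j : ℕ) : ℝ[X] :=
  descPochhammer ℝ j * (ascPochhammer ℝ (N - j)).comp (X - C (N + β))

/-- For `P` of degree at most `N`, the polynomial `Q` of degree at most `N` which, up to explicit
factors, gives both the Taylor coefficients of `P(x) (1 - x) ^ β` relative to those of
`(1 - x) ^ (N + β)`, as the values `Q(l)` for `l : ℕ`, and the moments
`∫₀¹ x ^ s P(x) (1 - x) ^ β dx`, as the values `Q(-s - 1)`. -/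
noncomputable def momentPolynomial (N : ℕ) (β : ℝ) (P : ℝ[X]) : ℝ[X] :=
  ∑ j ∈ range (N + 1), C (P.coeff j) * momentBasis N β j

lemma eval_momentBasis (N : ℕ) (β : ℝ) (j : ℕ) (y : ℝ) :
    (momentBasis N β j).eval y = (descPochhammer ℝ j).eval y * poch (y - (N + β)) (N - j) := by
  simp [momentBasis, poch, eval_comp]

lemma eval_momentPolynomial (N : ℕ) (β : ℝ) (P : ℝ[X]) (y : ℝ) :
    (momentPolynomial N β P).eval y =
      ∑ j ∈ range (N + 1), P.coeff j * (momentBasis N β j).eval y := by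
  simp [momentPolynomial, eval_finsetSum]

lemma natDegree_momentBasis_le {N j : ℕ} (hj : j ≤ N) (β : ℝ) :
    (momentBasis N β j).natDegree ≤ N := by
  refine natDegree_mul_le.trans ?_
  rw [descPochhammer_natDegree, natDegree_comp, ascPochhammer_natDegree, natDegree_X_sub_C]
  lia

lemma natDegree_momentPolynomial_le (N : ℕ) (β : ℝ) (P : ℝ[X]) :
    (momentPolynomial N β P).natDegree ≤ N :=
  natDegree_sum_le_of_forall_le _ _ fun _ hj ↦
    (natDegree_C_mul_le _ _).trans (natDegree_momentBasis_le (mem_range_succ_iff.1 hj) β)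

lemma eval_momentPolynomial_natCast_add (N : ℕ) (β : ℝ) (P : ℝ[X]) :
    (momentPolynomial N β P).eval (N + β) = P.coeff N * poch (β + 1) N := by
  rw [eval_momentPolynomial, sum_range_succ, sum_eq_zero fun j hj ↦ ?_, zero_add,
    eval_momentBasis, Nat.sub_self, poch_zero, mul_one, descPochhammer_eval_eq_ascPochhammer, poch]
  · ring_nf
  · rw [eval_momentBasis, sub_self, poch_zero_left (by grind), mul_zero, mul_zero]

lemma hasSum_momentBasis {N j : ℕ} (hj : j ≤ N) (β : ℝ) {x : ℝ} (hx : |x| < 1) :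
    HasSum (fun l : ℕ ↦ (momentBasis N β j).eval (l : ℝ) *
        (poch (-N - β) l * x ^ l / l.factorial))
      (poch (-N - β) N * (x ^ j * (1 - x) ^ β)) := by
  rw [← hasSum_nat_add_iff' j, sum_eq_zero fun l hl ↦ ?_, sub_zero]
  · have hsum := (hasSum_one_sub_rpow_neg (-β) hx).mul_left (poch (-N - β) N * x ^ j)
    rw [neg_neg, mul_assoc] at hsum
    refine hsum.congr_fun fun m ↦ ?_
    have hpoch : poch (-N - β) (m + j) * poch ((m + j : ℕ) - (N + β)) (N - j) =
        poch (-N - β) N * poch (-β) m := by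
      rw [show ((m + j : ℕ) : ℝ) - (N + β) = -N - β + (m + j : ℕ) by ring, ← poch_add,
        show m + j + (N - j) = N + m by lia, poch_add]
      ring_nf
    calc _ = (descPochhammer ℝ j).eval ((m + j : ℕ) : ℝ) / (m + j).factorial *
          (poch (-N - β) (m + j) * poch ((m + j : ℕ) - (N + β)) (N - j)) * x ^ (m + j) := by
          rw [eval_momentBasis]; ring
      _ = _ := by
          rw [descPochhammer_eval_add_div_factorial, hpoch, pow_add]; ring
  · rw [eval_momentBasis, descPochhammer_eval_coe_nat_of_lt (mem_range.1 hl), zero_mul, zero_mul]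

lemma hasSum_momentPolynomial {N : ℕ} (β : ℝ) {P : ℝ[X]} (hP : P.natDegree ≤ N) {x : ℝ}
    (hx : |x| < 1) :
    HasSum (fun l : ℕ ↦ (momentPolynomial N β P).eval (l : ℝ) *
        (poch (-N - β) l * x ^ l / l.factorial))
      (poch (-N - β) N * (P.eval x * (1 - x) ^ β)) := by
  have hvalue : poch (-N - β) N * (P.eval x * (1 - x) ^ β) =
      ∑ j ∈ range (N + 1), P.coeff j * (poch (-N - β) N * (x ^ j * (1 - x) ^ β)) := by
    rw [eval_eq_sum_range' (Nat.lt_succ_of_le hP), sum_mul, mul_sum]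
    exact sum_congr rfl fun j _ ↦ by ring
  rw [hvalue]
  refine (hasSum_sum fun j hj ↦ (hasSum_momentBasis (mem_range_succ_iff.1 hj) β hx).mul_left
    (P.coeff j)).congr_fun fun l ↦ ?_
  rw [eval_momentPolynomial, sum_mul]
  exact sum_congr rfl fun j _ ↦ by ring

lemma integral_rpow_add_eq_momentBasis {N j : ℕ} (hj : j ≤ N) {s β : ℝ} (hs : -1 < s)
    (hβ : -1 < β) :
    ∫ x in Set.Ioo (0 : ℝ) 1, x ^ (s + j) * (1 - x) ^ β =
      Real.Gamma (s + 1) * Real.Gamma (β + 1) / Real.Gamma (s + β + N + 2) *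
        ((-1) ^ N * (momentBasis N β j).eval (-s - 1)) := by
  have := j.cast_nonneg (α := ℝ)
  obtain ⟨k, rfl⟩ := Nat.exists_eq_add_of_le hj
  have hnum : Real.Gamma (s + j + 1) = Real.Gamma (s + 1) * poch (s + 1) j := by
    rw [add_right_comm, Gamma_add_natCast (by linarith)]
  have hden : Real.Gamma (s + β + (j + k : ℕ) + 2) =
      Real.Gamma (s + j + β + 2) * poch (s + j + β + 2) k := by
    rw [← Gamma_add_natCast (by linarith)]
    push_cast
    ring_nf
  have hbasis : (-1) ^ (j + k) * (momentBasis (j + k) β j).eval (-s - 1) =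
      poch (s + 1) j * poch (s + j + β + 2) k := by
    rw [eval_momentBasis, Nat.add_sub_cancel_left, show -s - 1 = -(s + 1) by ring,
      descPochhammer_eval_neg, show -(s + 1) - ((j + k : ℕ) + β) = -(s + j + β + 1 + k) by
        push_cast; ring, poch_neg, pow_add,
      show s + j + β + 1 + k - k + 1 = s + j + β + 2 by ring]
    linear_combination (poch (s + 1) j * poch (s + j + β + 2) k) *
      (by simp [← mul_pow] : ((-1 : ℝ) ^ j * (-1) ^ j) * ((-1) ^ k * (-1) ^ k) = 1)
  rw [integral_rpow_mul_one_sub_rpow (by linarith) hβ, hnum, hden, hbasis]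
  have := (poch_pos (a := s + j + β + 2) (by linarith) k).ne'
  field_simp

lemma integral_eval_mul_rpow_eq_momentPolynomial {N : ℕ} {s β : ℝ} (hs : -1 < s) (hβ : -1 < β)
    {P : ℝ[X]} (hP : P.natDegree ≤ N) :
    ∫ x in Set.Ioo (0 : ℝ) 1, P.eval x * (x ^ s * (1 - x) ^ β) =
      Real.Gamma (s + 1) * Real.Gamma (β + 1) / Real.Gamma (s + β + N + 2) *
        ((-1) ^ N * (momentPolynomial N β P).eval (-s - 1)) := by
  have hexpand : Set.EqOn (fun x : ℝ ↦ P.eval x * (x ^ s * (1 - x) ^ β))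
      (fun x ↦ ∑ j ∈ range (N + 1), P.coeff j * (x ^ (s + j) * (1 - x) ^ β)) (Set.Ioo 0 1) := by
    intro x hx
    simp only [eval_eq_sum_range' (Nat.lt_succ_of_le hP), sum_mul, Real.rpow_add_natCast hx.1.ne']
    exact sum_congr rfl fun j _ ↦ by ring
  rw [setIntegral_congr_fun measurableSet_Ioo hexpand, integral_finsetSum _ fun j _ ↦
    (integrableOn_rpow_mul_one_sub_rpow (by linarith [j.cast_nonneg (α := ℝ)]) hβ).const_mul _,
    eval_momentPolynomial, mul_sum, mul_sum]
  refine sum_congr rfl fun j hj ↦ ?_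
  rw [integral_const_mul, integral_rpow_add_eq_momentBasis (mem_range_succ_iff.1 hj) hs hβ]
  ring

lemma eval_momentPolynomial_eq_zero_of_integral_eq_zero {N : ℕ} {s β : ℝ} (hs : -1 < s)
    (hβ : -1 < β) {P : ℝ[X]} (hP : P.natDegree ≤ N)
    (hint : ∫ x in Set.Ioo (0 : ℝ) 1, P.eval x * (x ^ s * (1 - x) ^ β) = 0) :
    (momentPolynomial N β P).eval (-s - 1) = 0 := by
  have := N.cast_nonneg (α := ℝ)
  have hGamma : Real.Gamma (s + 1) * Real.Gamma (β + 1) / Real.Gamma (s + β + N + 2) ≠ 0 :=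
    (div_pos (mul_pos (Real.Gamma_pos_of_pos (by linarith)) (Real.Gamma_pos_of_pos (by linarith)))
      (Real.Gamma_pos_of_pos (by linarith))).ne'
  simpa [integral_eval_mul_rpow_eq_momentPolynomial hs hβ hP, hGamma] using hint

end MomentPolynomial

section JacobiPineiro

open Polynomial

lemma eq_C_coeff_mul_nodal {R κ : Type*} [CommRing R] [IsDomain R] {s : Finset κ} {v : κ → R}
    (hv : Set.InjOn v s) {Q : R[X]} (hQ : Q.natDegree ≤ #s) (hroot : ∀ k ∈ s, Q.eval (v k) = 0) :
    Q = C (Q.coeff #s) * Lagrange.nodal s v := by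
  refine eq_of_degree_sub_lt_of_eval_index_eq s hv ?_ fun k hk ↦ ?_
  · rw [degree_lt_iff_coeff_zero]
    intro m hm
    rcases hm.eq_or_lt with rfl | hlt
    · have hlead : (Lagrange.nodal s v).coeff #s = 1 := by
        simpa only [Monic, leadingCoeff, Lagrange.natDegree_nodal] using
          Lagrange.nodal_monic (s := s) (v := v)
      simp [hlead]
    · rw [coeff_sub, coeff_C_mul, coeff_eq_zero_of_natDegree_lt (hQ.trans_lt hlt),
        coeff_eq_zero_of_natDegree_lt (Lagrange.natDegree_nodal.trans_lt hlt), mul_zero, sub_zero]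
  · rw [hroot k hk, eval_mul, Lagrange.eval_nodal_at_node hk, mul_zero]

variable {ι : Type*} {n : ι → ℕ} {α : ι → ℝ}

lemma injective_add_fin_of_sub_ne_intCast
    (hα : ∀ i j, i ≠ j → ∀ z : ℤ, α i - α j ≠ (z : ℝ)) :
    Function.Injective fun t : Σ i, Fin (n i) ↦ α t.1 + (t.2 : ℕ) := by
  rintro ⟨i, k⟩ ⟨j, m⟩ h
  obtain rfl : i = j := by
    by_contra hij
    exact hα i j hij ((m : ℤ) - k) (by push_cast; linarith)
  simpa [Fin.ext_iff] using h

variable [Fintype ι]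

lemma exists_eval_eq_mul_prod_poch
    (hnodes : Function.Injective fun t : Σ i, Fin (n i) ↦ α t.1 + (t.2 : ℕ))
    {Q : ℝ[X]} (hQ : Q.natDegree ≤ ∑ i, n i)
    (hroot : ∀ i, ∀ j < n i, Q.eval (-(α i + j) - 1) = 0) :
    ∃ e : ℝ, ∀ y, Q.eval y = e * ∏ i, poch (α i + 1 + y) (n i) := by
  let v : (Σ i, Fin (n i)) → ℝ := fun t ↦ -(α t.1 + (t.2 : ℕ)) - 1
  have hv : Function.Injective v := sub_left_injective.comp (neg_injective.comp hnodes)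
  have hfactor := eq_C_coeff_mul_nodal (s := univ) hv.injOn (by simpa using hQ)
    fun t _ ↦ hroot t.1 t.2 t.2.2
  refine ⟨Q.coeff #(univ : Finset (Σ i, Fin (n i))), fun y ↦ ?_⟩
  have hprod : (Lagrange.nodal univ v).eval y = ∏ i, poch (α i + 1 + y) (n i) := by
    rw [Lagrange.eval_nodal, Fintype.prod_sigma]
    refine prod_congr rfl fun i _ ↦ ?_
    rw [poch_eq_prod_range, ← Fin.prod_univ_eq_prod_range fun j : ℕ ↦ α i + 1 + y + j]
    exact prod_congr rfl fun j _ ↦ by ring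
  rw [← hprod, ← eval_C_mul, ← hfactor]

lemma prod_poch_div_poch (hα : ∀ i, -1 < α i) (l : ℕ) :
    ∏ i, poch (α i + n i + 1) l / poch (α i + 1) l =
      (∏ i, poch (α i + 1 + l) (n i)) / ∏ i, poch (α i + 1) (n i) := by
  rw [← prod_div_distrib]
  refine prod_congr rfl fun i _ ↦ ?_
  rw [← poch_add_natCast_div_poch (by linarith [hα i]), add_right_comm]

lemma exists_eval_momentPolynomial_eq_of_orthogonal
    (hα : ∀ i, -1 < α i)
    (hnodes : Function.Injective fun t : Σ i, Fin (n i) ↦ α t.1 + (t.2 : ℕ))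
    {β : ℝ} (hβ : -1 < β) {P : ℝ[X]} (hdeg : P.natDegree ≤ ∑ i, n i)
    (horth : ∀ i, ∀ j < n i,
      ∫ x in Set.Ioo (0 : ℝ) 1, x ^ j * P.eval x * x ^ α i * (1 - x) ^ β = 0) :
    ∃ e : ℝ, ∀ y, (momentPolynomial (∑ i, n i) β P).eval y =
      e * ∏ i, poch (α i + 1 + y) (n i) := by
  refine exists_eval_eq_mul_prod_poch hnodes (natDegree_momentPolynomial_le _ _ _) fun i j hj ↦ ?_
  have hs : -1 < α i + j := by linarith [hα i, j.cast_nonneg (α := ℝ)]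
  refine eval_momentPolynomial_eq_zero_of_integral_eq_zero hs hβ hdeg ?_
  refine (setIntegral_congr_fun measurableSet_Ioo fun x hx ↦ ?_).trans (horth i j hj)
  simp only [Real.rpow_add_natCast hx.1.ne']
  ring

lemma hasSum_of_eval_momentPolynomial_eq
    (hα : ∀ i, -1 < α i) {N : ℕ} {β : ℝ} {P : ℝ[X]} (hP : P.natDegree ≤ N) {e : ℝ}
    (he : e ≠ 0)
    (heval : ∀ y, (momentPolynomial N β P).eval y = e * ∏ i, poch (α i + 1 + y) (n i))
    {x : ℝ} (hx : |x| < 1) :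
    HasSum (fun l : ℕ ↦ poch (-N - β) l * (∏ i, poch (α i + n i + 1) l / poch (α i + 1) l) *
        x ^ l / l.factorial)
      ((e * ∏ i, poch (α i + 1) (n i))⁻¹ * (poch (-N - β) N * (P.eval x * (1 - x) ^ β))) := by
  refine ((hasSum_momentPolynomial β hP hx).mul_left _).congr_fun fun l ↦ ?_
  rw [heval, prod_poch_div_poch hα]
  field_simp

end JacobiPineiro

theorem jacobiPineiro_typeII_series_general {ι : Type*} [Fintype ι] {n : ι → ℕ}
    {S : ℕ} (hS : S = ∑ i, n i) {α : ι → ℝ} (hα : ∀ i, -1 < α i)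
    (hnodes : Function.Injective fun t : Σ i, Fin (n i) ↦ α t.1 + (t.2 : ℕ))
    {β : ℝ} (hβ : -1 < β) {P : Polynomial ℝ} (hmonic : P.Monic) (hdeg : P.natDegree = S)
    (horth : ∀ i, ∀ j < n i,
      ∫ x in Set.Ioo (0 : ℝ) 1, x ^ j * P.eval x * x ^ α i * (1 - x) ^ β = 0)
    {x : ℝ} (hx : |x| < 1) :
    Summable (fun l : ℕ ↦
      |poch (-(S : ℝ) - β) l * (∏ i, poch (α i + n i + 1) l / poch (α i + 1) l) * x ^ l /
        (l.factorial : ℝ)|) ∧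
    P.eval x * (1 - x) ^ β =
      (-1 : ℝ) ^ S * (∏ i, poch (α i + 1) (n i) / poch (α i + β + S + 1) (n i)) *
        ∑' l : ℕ, poch (-(S : ℝ) - β) l * (∏ i, poch (α i + n i + 1) l / poch (α i + 1) l) *
          x ^ l / (l.factorial : ℝ) := by
  obtain ⟨e, he⟩ := exists_eval_momentPolynomial_eq_of_orthogonal hα hnodes hβ (hdeg.trans hS).le
    horth
  rw [← hS] at he
  have hleading : e * ∏ i, poch (α i + β + S + 1) (n i) = poch (β + 1) S := by
    have htop := eval_momentPolynomial_natCast_add S β P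
    rw [he, ← hdeg, hmonic.coeff_natDegree, one_mul, hdeg] at htop
    rw [← htop]
    exact congrArg _ (prod_congr rfl fun i _ ↦ by ring_nf)
  obtain ⟨he0, htop0⟩ : e ≠ 0 ∧ ∏ i, poch (α i + β + S + 1) (n i) ≠ 0 :=
    mul_ne_zero_iff.1 (hleading ▸ (poch_pos (by linarith) S).ne')
  have hbottom0 : ∏ i, poch (α i + 1) (n i) ≠ 0 :=
    prod_ne_zero_iff.2 fun i _ ↦ (poch_pos (by linarith [hα i]) _).ne'
  have hsum := hasSum_of_eval_momentPolynomial_eq hα hdeg.le he0 he hx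
  have hsign : poch (-S - β) S = (-1) ^ S * (e * ∏ i, poch (α i + β + S + 1) (n i)) := by
    rw [hleading, ← neg_add', poch_neg, show (S : ℝ) + β - S + 1 = β + 1 by ring]
  refine ⟨hsum.summable.abs, ?_⟩
  rw [hsum.tsum_eq, hsign, prod_div_distrib]
  field_simp
  simp [← pow_mul, mul_comm S]

/-- Hypergeometric series representation of the weighted type II Jacobi–Piñeiro
polynomial on `(0,1)`, with the series converging absolutely. -/
theorem jacobiPineiro_typeII_series
    (p : ℕ) (hp : 0 < p) (n : Fin p → ℕ) (hn : ∀ i, 0 < n i)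
    (S : ℕ) (hS : S = ∑ i, n i)
    (α : Fin p → ℝ) (hα : ∀ i, -1 < α i)
    (hαint : ∀ i j, i ≠ j → ∀ z : ℤ, α i - α j ≠ (z : ℝ))
    (β : ℝ) (hβ : -1 < β)
    (P : Polynomial ℝ) (hmonic : P.Monic) (hdeg : P.natDegree = S)
    (horth : ∀ i, ∀ j < n i,
      ∫ x in Set.Ioo (0 : ℝ) 1, x ^ j * P.eval x * x ^ α i * (1 - x) ^ β = 0) :
    ∀ x ∈ Set.Ioo (0 : ℝ) 1,
      Summable (fun l : ℕ =>
        |poch (-(S : ℝ) - β) l *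
            (∏ q, poch (α q + n q + 1) l / poch (α q + 1) l) * x ^ l /
          (Nat.factorial l : ℝ)|) ∧
      P.eval x * (1 - x) ^ β =
        (-1 : ℝ) ^ S *
          (∏ q, poch (α q + 1) (n q) / poch (α q + β + S + 1) (n q)) *
          ∑' l : ℕ,
            poch (-(S : ℝ) - β) l *
                (∏ q, poch (α q + n q + 1) l / poch (α q + 1) l) * x ^ l /
              (Nat.factorial l : ℝ) := by
  have hnodes := injective_add_fin_of_sub_ne_intCast (n := n) hαint
  exact fun x hx ↦ jacobiPineiro_typeII_series_general hS hα hnodes hβ hmonic hdeg horth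
    (abs_lt.2 ⟨by linarith [hx.1], hx.2⟩)
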